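/- Let L be a relational first-order language, let U be a countably infinite ultrahomogeneous L-structure with the pigeonhole property, and let u : ℕ → U be a bijection. Then the enumeration endowment of U is indivisible: for every coloring c : U → Bool there is an L-embedding e : U ↪ U such that c is constant on the range of e and the map n ↦ u⁻¹(e (u n)) is strictly increasing. -/

import Mathlib

open FirstOrder

def HasPigeonhole (L : Language) (U : Type*) [L.Structure U] : Prop :=
  ∀ S : Set U, (∃ f : U ↪[L] U, Set.range f = S) ∨ (∃ f : U ↪[L] U, Set.range f = Sᶜ)

/-!
The enumeration matters only through the rank `r = u⁻¹`, a finite-to-one map into `ℕ`. Inside a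
monochromatic copy of `U`, the embedding `e` is the limit of a fusion sequence: stage `n` keeps the
values at points of rank below `n` and moves every other value beyond the ranks of the kept ones.
The pigeonhole property makes every cofinite subset of `U` a copy of `U`, so the finitely many
forbidden values can be removed from the target; ultrahomogeneity then provides an embedding into
what is left that agrees with the old one on the finite set of points already fixed.

Cofinite copies also force every function symbol to return one of its arguments, so finite sets
are finite substructures even when the language has function symbols.
-/

open Set Filter

section Embedding

variable {L : Language} {M N : Type*} [L.Structure M] [L.Structure N]

theorem exists_embedding_eqOn_range_subset (hM : L.IsUltrahomogeneous M) {S : L.Substructure M}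
    (hS : S.FG) {e h : M ↪[L] N} (heh : MapsTo e S (range h)) :
    ∃ e' : M ↪[L] N, EqOn e' e S ∧ range e' ⊆ range h := by
  let eS : S ↪[L] h.toHom.range :=
    (e.domRestrict S).codRestrict h.toHom.range fun x ↦ heh x.2
  obtain ⟨g, hg⟩ := hM S hS (h.equivRange.symm.toEmbedding.comp eS)
  refine ⟨h.comp g.toEmbedding, fun x hx ↦ ?_, range_comp_subset_range g h⟩
  have hgx : h.equivRange.symm (eS ⟨x, hx⟩) = g x := DFunLike.congr_fun hg ⟨x, hx⟩
  calc h (g x) = h.equivRange (g x) := rfl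
    _ = eS ⟨x, hx⟩ := by rw [← hgx, h.equivRange.apply_symm_apply]

theorem exists_embedding_coe_eq_of_eventually_eq {ι : Type*} {l : Filter ι} [l.NeBot]
    {E : ι → M ↪[L] N} {d : M → N} (hd : ∀ x, ∀ᶠ i in l, d x = E i x) :
    ∃ e : M ↪[L] N, ⇑e = d := by
  have hcomp {n : ℕ} (x : Fin n → M) : ∀ᶠ i in l, d ∘ x = E i ∘ x :=
    (eventually_all.2 fun j ↦ hd (x j)).mono fun _ h ↦ funext h
  refine ⟨⟨⟨d, fun x y hxy ↦ ?_⟩, fun g x ↦ ?_, fun R x ↦ ?_⟩, rfl⟩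
  · obtain ⟨i, hx, hy⟩ := ((hd x).and (hd y)).exists
    exact (E i).injective (hx.symm.trans (hxy.trans hy))
  · obtain ⟨i, hg, hx⟩ := ((hd (Language.Structure.funMap g x)).and (hcomp x)).exists
    exact hg.trans (((E i).map_fun g x).trans (congrArg _ hx.symm))
  · obtain ⟨i, hx⟩ := (hcomp x).exists
    change Language.Structure.RelMap R (d ∘ x) ↔ _
    rw [hx, (E i).map_rel]

theorem exists_embedding_of_fusion (r : M → ℕ) {C : Set (M ↪[L] N)} (hC : C.Nonempty)
    {P : ℕ → (M ↪[L] N) → Prop}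
    (hstep : ∀ n, ∀ e ∈ C, ∃ e' ∈ C, P n e' ∧ ∀ x, r x < n → e' x = e x) :
    ∃ e : M ↪[L] N, ∀ n, ∃ e' ∈ C, P n e' ∧ ∀ x, r x ≤ n → e x = e' x := by
  obtain ⟨e₀, he₀⟩ := hC
  choose! next hnext_mem hnext_P hnext_eq using hstep
  let E : ℕ → M ↪[L] N := Nat.rec e₀ next
  have hE_mem (n : ℕ) : E n ∈ C := by
    induction n with
    | zero => exact he₀
    | succ n ih => exact hnext_mem n _ ih
  have hE_eq {x : M} {n : ℕ} (hn : r x < n) : E (r x + 1) x = E n x := by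
    induction n, hn using Nat.le_induction with
    | base => rfl
    | succ n hn ih => exact ih.trans (hnext_eq n _ (hE_mem n) x hn).symm
  obtain ⟨e, he⟩ := exists_embedding_coe_eq_of_eventually_eq
    fun x ↦ (eventually_gt_atTop (r x)).mono fun _ ↦ hE_eq
  exact ⟨e, fun n ↦ ⟨E (n + 1), hE_mem (n + 1), hnext_P n _ (hE_mem n),
    fun x hx ↦ (congrFun he x).trans (hE_eq (Nat.lt_succ_of_le hx))⟩⟩

end Embedding

/-- Every cofinite subset of `U` is the range of a self-embedding. This is the part of the
pigeonhole property that is used after a monochromatic copy has been chosen. -/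
def HasCofiniteCopies (L : Language) (U : Type*) [L.Structure U] : Prop :=
  ∀ F : Set U, F.Finite → ∃ f : U ↪[L] U, range f = Fᶜ

section Copies

variable {L : Language} {U : Type*} [L.Structure U]

namespace HasPigeonhole

theorem hasCofiniteCopies [Infinite U] (hP : HasPigeonhole L U) : HasCofiniteCopies L U := by
  intro F hF
  refine (hP F).resolve_left ?_
  rintro ⟨f, rfl⟩
  exact infinite_range_of_injective f.injective hF

theorem exists_monochromatic_embedding (hP : HasPigeonhole L U) {κ : Type*}
    [Finite κ] (c : U → κ) : ∃ f : U ↪[L] U, ∀ x y, c (f x) = c (f y) := by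
  suffices H : ∀ K : Set κ, K.Finite → ∀ c : U → κ, range c ⊆ K →
      ∃ f : U ↪[L] U, ∀ x y, c (f x) = c (f y) from H univ finite_univ c (subset_univ _)
  intro K hK
  induction K, hK using Set.Finite.induction_on with
  | empty => exact fun c hc ↦ ⟨.refl L U, fun x ↦ (hc (mem_range_self x)).elim⟩
  | @insert k K _ _ ih =>
    intro c hc
    rcases hP (c ⁻¹' {k}) with ⟨f, hf⟩ | ⟨f, hf⟩
    · have hfk (x : U) : c (f x) = k := hf.subset (mem_range_self x)
      exact ⟨f, fun x y ↦ (hfk x).trans (hfk y).symm⟩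
    · have hfK : range (c ∘ f) ⊆ K := by
        rintro _ ⟨x, rfl⟩
        exact (hc (mem_range_self (f x))).resolve_left (hf.subset (mem_range_self x))
      obtain ⟨g, hg⟩ := ih (c ∘ f) hfK
      exact ⟨f.comp g, hg⟩

end HasPigeonhole

namespace HasCofiniteCopies

theorem funMap_mem_range (hC : HasCofiniteCopies L U) {n : ℕ} (g : L.Functions n)
    (x : Fin n → U) : Language.Structure.funMap g x ∈ range x := by
  by_contra hgx
  obtain ⟨f, hf⟩ := hC {Language.Structure.funMap g x} (finite_singleton _)
  have hx (i : Fin n) : x i ∈ range f := hf ▸ fun hi ↦ hgx ⟨i, hi⟩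
  choose y hy using hx
  obtain rfl : f ∘ y = x := funext hy
  exact hf.subset (mem_range_self (Language.Structure.funMap g y)) (f.map_fun g y)

theorem coe_closure (hC : HasCofiniteCopies L U) (A : Set U) :
    (Language.Substructure.closure L A : Set U) = A := by
  let S : L.Substructure U := ⟨A, fun g x hx ↦ by
    obtain ⟨i, hi⟩ := hC.funMap_mem_range g x
    exact hi ▸ hx i⟩
  exact Subset.antisymm (Language.Substructure.closure_le (S := S).2 subset_rfl)
    Language.Substructure.subset_closure

theorem exists_range_eq_sdiff (hC : HasCofiniteCopies L U) {N : Type*} [L.Structure N]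
    (f : U ↪[L] N) {F : Set N} (hF : F.Finite) : ∃ h : U ↪[L] N, range h = range f \ F := by
  obtain ⟨g, hg⟩ := hC (f ⁻¹' F) (hF.preimage f.injective.injOn)
  refine ⟨f.comp g, ?_⟩
  calc range (f ∘ g) = f '' (f ⁻¹' Fᶜ) := by rw [range_comp, hg, preimage_compl]
    _ = range f \ F := image_preimage_eq_range_inter

theorem exists_embedding_eqOn_avoiding (hC : HasCofiniteCopies L U)
    (hU : L.IsUltrahomogeneous U) {N : Type*} [L.Structure N] {e f : U ↪[L] N}
    (hef : range e ⊆ range f) {A : Set U} (hA : A.Finite) {F : Set N} (hF : F.Finite) :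
    ∃ e' : U ↪[L] N, EqOn e' e A ∧ range e' ⊆ range f ∧ ∀ x ∉ A, e' x ∉ F := by
  obtain ⟨h, hh⟩ := hC.exists_range_eq_sdiff f (hF.sdiff (t := e '' A))
  have heA : MapsTo e (Language.Substructure.closure L A) (range h) := by
    rw [hC.coe_closure, hh]
    exact fun x hx ↦ ⟨hef (mem_range_self x), fun hxF ↦ hxF.2 (mem_image_of_mem e hx)⟩
  obtain ⟨e', he'e, he'h⟩ :=
    exists_embedding_eqOn_range_subset hU (Language.Substructure.fg_closure hA) heA
  rw [hC.coe_closure] at he'e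
  rw [hh] at he'h
  refine ⟨e', he'e, he'h.trans sdiff_subset, fun x hx hxF ↦ ?_⟩
  refine (he'h (mem_range_self x)).2 ⟨hxF, ?_⟩
  rwa [← he'e.image_eq, e'.injective.mem_set_image]

theorem exists_embedding_rank_lt (hC : HasCofiniteCopies L U) (hU : L.IsUltrahomogeneous U)
    {r : U → ℕ} (hr : Tendsto r cofinite atTop) (f : U ↪[L] U) :
    ∃ e : U ↪[L] U, range e ⊆ range f ∧ ∀ ⦃x y⦄, r x < r y → r (e x) < r (e y) := by
  have hfin (n : ℕ) : {x | r x ≤ n}.Finite := by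
    simpa only [eventually_cofinite, not_lt] using hr.eventually_gt_atTop n
  obtain ⟨e, he⟩ := exists_embedding_of_fusion r (C := {e : U ↪[L] U | range e ⊆ range f})
    (P := fun n e ↦ ∀ x y, r x < n → n ≤ r y → r (e x) < r (e y)) ⟨f, Subset.refl (range f)⟩ <| by
      intro n e hef
      have hA : {x | r x < n}.Finite := (hfin n).subset fun x (hx : r x < n) ↦ hx.le
      obtain ⟨e', he'e, he'f, he'F⟩ := hC.exists_embedding_eqOn_avoiding hU hef hA
        (hA.biUnion fun x _ ↦ hfin (r (e x)))
      refine ⟨e', he'f, fun x y hx hy ↦ lt_of_not_ge fun hyx ↦ ?_, he'e⟩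
      exact he'F y hy.not_gt (mem_biUnion hx (by rwa [he'e hx] at hyx))
  refine ⟨e, ?_, fun x y hxy ↦ ?_⟩
  · rintro _ ⟨x, rfl⟩
    obtain ⟨e', he'f, -, hee'⟩ := he (r x)
    exact hee' x le_rfl ▸ he'f (mem_range_self x)
  · obtain ⟨e', -, he', hee'⟩ := he (r y)
    rw [hee' x hxy.le, hee' y le_rfl]
    exact he' x y hxy le_rfl

end HasCofiniteCopies

theorem enumeration_endowment_indivisible_general [Infinite U] (hU : L.IsUltrahomogeneous U)
    (hP : HasPigeonhole L U) {r : U → ℕ} (hr : Tendsto r cofinite atTop) {κ : Type*} [Finite κ]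
    (c : U → κ) :
    ∃ e : U ↪[L] U, (∀ x y, c (e x) = c (e y)) ∧ ∀ ⦃x y⦄, r x < r y → r (e x) < r (e y) := by
  obtain ⟨f, hf⟩ := hP.exists_monochromatic_embedding c
  obtain ⟨e, hef, he⟩ := hP.hasCofiniteCopies.exists_embedding_rank_lt hU hr f
  refine ⟨e, fun x y ↦ ?_, he⟩
  obtain ⟨x', hx'⟩ := hef (mem_range_self x)
  obtain ⟨y', hy'⟩ := hef (mem_range_self y)
  rw [← hx', ← hy', hf x' y']

end Copies

theorem enumeration_endowment_indivisible {L : Language} [L.IsRelational]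
    {U : Type*} [L.Structure U] [Countable U] [Infinite U]
    (hU : L.IsUltrahomogeneous U) (hP : HasPigeonhole L U)
    (u : ℕ ≃ U) :
    ∀ c : U → Bool, ∃ e : U ↪[L] U,
      (∀ x y : U, c (e x) = c (e y)) ∧
      StrictMono (fun n => u.symm (e (u n))) := by
  intro c
  have hu : Tendsto u.symm cofinite atTop :=
    Nat.cofinite_eq_atTop ▸ u.symm.injective.tendsto_cofinite
  obtain ⟨e, hc, he⟩ := enumeration_endowment_indivisible_general hU hP hu c
  exact ⟨e, hc, fun m n hmn ↦ he (by simpa using hmn)⟩
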